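/- arXiv:1710.07973 — 3 statements merged into one kernel-verified Lean document; each statement's English description precedes it below -/
import Mathlib

section
/- Let n ≥ 2 and 1 ≤ k ≤ n be integers. Every finite set U ⊆ ℝ^n × ℝ that is shattered by the family H_k^{n+1} of affine half-spaces generated by k-sparse vectors and a threshold satisfies |U| ≤ 2·(k+1)·lg(e·(n+1)); in particular, the VC-dimension of H_k^{n+1} is at most ⌊2(k+1)·lg(e(n+1))⌋. -/
/-!
Fix the support `s` of the sparse vector. The half-spaces supported on `s` are the sets `{f ≥ 0}`
with `f` in a space of functions of dimension at most `k + 1`, so their VC dimension is at most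
`k + 1`, and by the Sauer–Shelah lemma they cut out at most `(|U| + 1) ^ (k + 1)` subsets of `U`.
There are at most `(n + 1) ^ k` supports. Dropping sparsity altogether, the whole family lives in a
space of dimension `n + 1`, so `|U| ≤ n + 1`; feeding this crude bound into the count removes
`|U|` from its right-hand side and leaves `2 ^ |U| ≤ (n + 1) ^ k * (n + 2) ^ (k + 1)`.
-/

open Real

noncomputable section

/-- A vector `x : ℝ^n` is `k`-sparse if it has at most `k` nonzero components. -/
def sparse (n k : ℕ) (x : Fin n → ℝ) : Prop :=
  ∃ s : Finset (Fin n), s.card ≤ k ∧ ∀ i ∉ s, x i = 0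

/-- The affine half-space in `ℝ^n × ℝ` generated by `x` and a threshold `θ`. -/
def affHalfSpace (n : ℕ) (x : Fin n → ℝ) (θ : ℝ) : Set ((Fin n → ℝ) × ℝ) :=
  {p | 0 ≤ (∑ i, p.1 i * x i) + p.2 * θ}

/-- A finite set `U` is shattered by a family `C` of subsets. -/
def Shatters {X : Type*} (C : Set (Set X)) (U : Finset X) : Prop :=
  ∀ B ⊆ U, ∃ A ∈ C, A ∩ (U : Set X) = (B : Set X)

section SetFamilies

open scoped Finset

variable {X ι : Type*} {C C' : Set (Set X)} {U T : Finset X} {d : ℕ}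

/-- The VC dimension of the family `C` is at most `d`. Only upper bounds are needed, so the VC
dimension itself, which may be infinite, is not introduced. -/
def VCDimLE (C : Set (Set X)) (d : ℕ) : Prop :=
  ∀ T : Finset X, Shatters C T → #T ≤ d

lemma Shatters.mono (h : C ⊆ C') (hC : Shatters C U) : Shatters C' U := fun B hB ↦
  let ⟨A, hA, hAB⟩ := hC B hB
  ⟨A, h hA, hAB⟩

lemma VCDimLE.anti (h : C ⊆ C') (hC' : VCDimLE C' d) : VCDimLE C d :=
  fun T hT ↦ hC' T (hT.mono h)

open scoped Classical in
/-- The finite family of subsets of `U` cut out by the members of `C`. It makes Mathlib's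
Sauer–Shelah lemma, stated for finite families of finite sets, available for `C`. -/
def traces (C : Set (Set X)) (U : Finset X) : Finset (Finset X) :=
  {B ∈ U.powerset | ∃ A ∈ C, A ∩ (U : Set X) = (B : Set X)}

lemma mem_traces {B : Finset X} :
    B ∈ traces C U ↔ B ⊆ U ∧ ∃ A ∈ C, A ∩ (U : Set X) = (B : Set X) := by
  simp only [traces, Finset.mem_filter, Finset.mem_powerset]

lemma Shatters.card_traces (hU : Shatters C U) : #(traces C U) = 2 ^ #U := by
  have htraces : traces C U = U.powerset := by
    ext B
    rw [mem_traces, Finset.mem_powerset]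
    exact and_iff_left_of_imp (hU B)
  rw [htraces, Finset.card_powerset]

lemma subset_of_shatters_traces [DecidableEq X] (hT : (traces C U).Shatters T) : T ⊆ U :=
  let ⟨_, hB, hTB⟩ := hT.exists_superset
  hTB.trans (mem_traces.mp hB).1

lemma shatters_of_shatters_traces [DecidableEq X] (hT : (traces C U).Shatters T) :
    Shatters C T := by
  intro B hB
  obtain ⟨B', hB', rfl⟩ := hT hB
  obtain ⟨A, hA, hAB'⟩ := (mem_traces.mp hB').2
  have hTU : (T : Set X) ⊆ U := Finset.coe_subset.mpr (subset_of_shatters_traces hT)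
  refine ⟨A, hA, ?_⟩
  rw [Finset.coe_inter, ← hAB', Set.inter_left_comm, Set.inter_eq_left.mpr hTU]

lemma card_filter_card_le_powerset_le (s : Finset X) (d : ℕ) :
    #{t ∈ s.powerset | #t ≤ d} ≤ (#s + 1) ^ d := by
  classical
  have hcover : {t ∈ s.powerset | #t ≤ d} ⊆
      (Finset.range (d + 1)).biUnion fun i ↦ s.powersetCard i := by
    intro t ht
    simpa [Nat.lt_succ_iff, and_comm] using ht
  calc #{t ∈ s.powerset | #t ≤ d}
      ≤ ∑ i ∈ Finset.range (d + 1), #(s.powersetCard i) :=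
        (Finset.card_le_card hcover).trans Finset.card_biUnion_le
    _ ≤ ∑ i ∈ Finset.range (d + 1), #s ^ i * d.choose i := by
        refine Finset.sum_le_sum fun i hi ↦ ?_
        have hchoose : 0 < d.choose i := Nat.choose_pos (Finset.mem_range_succ_iff.mp hi)
        rw [Finset.card_powersetCard]
        exact (Nat.choose_le_pow _ _).trans (Nat.le_mul_of_pos_right _ hchoose)
    _ = (#s + 1) ^ d := by simp only [add_pow, one_pow, mul_one, Nat.cast_id]

lemma VCDimLE.card_traces_le (hC : VCDimLE C d) (U : Finset X) :
    #(traces C U) ≤ (#U + 1) ^ d := by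
  classical
  calc #(traces C U) ≤ #(traces C U).shatterer := Finset.card_le_card_shatterer _
    _ ≤ #{T ∈ U.powerset | #T ≤ d} := by
        refine Finset.card_le_card fun T hT ↦ ?_
        rw [Finset.mem_shatterer] at hT
        exact Finset.mem_filter.mpr ⟨Finset.mem_powerset.mpr (subset_of_shatters_traces hT),
          hC T (shatters_of_shatters_traces hT)⟩
    _ ≤ (#U + 1) ^ d := card_filter_card_le_powerset_le U d

lemma Shatters.two_pow_card_le_of_biUnion {I : Finset ι} {F : ι → Set (Set X)}
    (hU : Shatters (⋃ i ∈ I, F i) U) (hF : ∀ i ∈ I, VCDimLE (F i) d) :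
    2 ^ #U ≤ #I * (#U + 1) ^ d := by
  classical
  have hcover : traces (⋃ i ∈ I, F i) U ⊆ I.biUnion fun i ↦ traces (F i) U := by
    intro B hB
    obtain ⟨hBU, A, hA, hAB⟩ := mem_traces.mp hB
    obtain ⟨i, hi, hAi⟩ := Set.mem_iUnion₂.mp hA
    exact Finset.mem_biUnion.mpr ⟨i, hi, mem_traces.mpr ⟨hBU, A, hAi, hAB⟩⟩
  calc 2 ^ #U = #(traces (⋃ i ∈ I, F i) U) := hU.card_traces.symm
    _ ≤ #(I.biUnion fun i ↦ traces (F i) U) := Finset.card_le_card hcover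
    _ ≤ #I * (#U + 1) ^ d :=
        Finset.card_biUnion_le_card_mul _ _ _ fun i hi ↦ (hF i hi).card_traces_le U

end SetFamilies

section NonnegSets

open scoped Finset
open Module Submodule

variable {X K : Type*} [Field K] [LinearOrder K]

/-- The sets `{a | 0 ≤ f a}` for `f` in a linear space `W` of functions: generalized half-spaces,
linear functionals being the case of `W` the dual of `X`. -/
def nonnegSets (W : Submodule K (X → K)) : Set (Set X) :=
  {A | ∃ f ∈ W, A = {a | 0 ≤ f a}}

lemma nonnegSets_mono {W W' : Submodule K (X → K)} (h : W ≤ W') : nonnegSets W ⊆ nonnegSets W' :=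
  fun _ ⟨f, hf, hA⟩ ↦ ⟨f, h hf, hA⟩

lemma exists_mem_nonneg_iff_of_shatters_nonnegSets {W : Submodule K (X → K)} {T : Finset X}
    (hT : Shatters (nonnegSets W) T) (P : X → Prop) : ∃ f ∈ W, ∀ a ∈ T, 0 ≤ f a ↔ P a := by
  classical
  obtain ⟨_, ⟨f, hf, rfl⟩, hfB⟩ := hT {a ∈ T | P a} (Finset.filter_subset _ _)
  refine ⟨f, hf, fun a ha ↦ ?_⟩
  simpa [ha] using Set.ext_iff.mp hfB a

variable [IsStrictOrderedRing K]

/- Some `f ∈ W` has the sign pattern of `g` on `T`, so every term of the vanishing sum is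
nonnegative, and a negative `g a` would make one of them positive. -/
lemma nonneg_of_shatters_nonnegSets {W : Submodule K (X → K)} {T : Finset X}
    (hT : Shatters (nonnegSets W) T) {g : X → K} (hg : ∀ f ∈ W, ∑ a ∈ T, g a * f a = 0) :
    ∀ a ∈ T, 0 ≤ g a := by
  obtain ⟨f, hf, hfg⟩ := exists_mem_nonneg_iff_of_shatters_nonnegSets hT (0 ≤ g ·)
  have hpos : ∀ a ∈ T, g a < 0 → 0 < g a * f a := fun a ha hga ↦
    mul_pos_of_neg_of_neg hga (lt_of_not_ge fun h ↦ hga.not_ge ((hfg a ha).mp h))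
  have hnonneg : ∀ a ∈ T, 0 ≤ g a * f a := fun a ha ↦
    (le_or_gt 0 (g a)).elim (fun h ↦ mul_nonneg h ((hfg a ha).mpr h)) fun h ↦ (hpos a ha h).le
  intro a ha
  by_contra! hga
  exact (hpos a ha hga).ne' ((Finset.sum_eq_zero_iff_of_nonneg hnonneg).mp (hg f hf) a ha)

/- Evaluations at the points of a shattered set are linearly independent in the dual of `W`. -/
lemma vcDimLE_nonnegSets (W : Submodule K (X → K)) [FiniteDimensional K W] :
    VCDimLE (nonnegSets W) (finrank K W) := by
  intro T hT
  let eval (a : X) : Dual K W := LinearMap.proj a ∘ₗ W.subtype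
  have hindep : LinearIndepOn K eval T := by
    refine linearIndepOn_finset_iff.mpr fun g hg a ha ↦ ?_
    have hsum : ∀ f ∈ W, ∑ a ∈ T, g a * f a = 0 := fun f hf ↦ by
      simpa [eval] using LinearMap.congr_fun hg ⟨f, hf⟩
    have hsum_neg : ∀ f ∈ W, ∑ a ∈ T, -g a * f a = 0 := fun f hf ↦ by
      simp only [neg_mul, Finset.sum_neg_distrib, hsum f hf, neg_zero]
    exact le_antisymm (neg_nonneg.mp (nonneg_of_shatters_nonnegSets hT hsum_neg a ha))
      (nonneg_of_shatters_nonnegSets hT hsum a ha)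
  simpa [Subspace.dual_finrank_eq] using hindep.fintype_card_le_finrank

end NonnegSets

section Sparse

open scoped Finset
open Module Submodule

variable {X ι K : Type*} [Field K]

/-- The functions `∑ i ∈ s, x i • φ i + θ • ψ`: the combinations of the features `φ i`, `i ∈ s`,
and of the function `ψ`, which carries the threshold and is not subject to sparsity. -/
def featureSpan (φ : ι → X → K) (ψ : X → K) (s : Finset ι) : Submodule K (X → K) :=
  span K (insert ψ (φ '' s))

lemma featureSpan_mono (φ : ι → X → K) (ψ : X → K) : Monotone (featureSpan φ ψ) :=
  fun _ _ hst ↦ span_mono (Set.insert_subset_insert (Set.image_mono (Finset.coe_subset.mpr hst)))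

lemma sum_smul_add_smul_mem_featureSpan (φ : ι → X → K) (ψ : X → K) (s : Finset ι) (x : ι → K)
    (θ : K) : ∑ i ∈ s, x i • φ i + θ • ψ ∈ featureSpan φ ψ s :=
  add_mem (sum_mem fun i hi ↦ smul_mem _ _ (subset_span (.inr ⟨i, hi, rfl⟩)))
    (smul_mem _ _ (subset_span (Set.mem_insert _ _)))

instance finiteDimensional_featureSpan (φ : ι → X → K) (ψ : X → K) (s : Finset ι) :
    FiniteDimensional K (featureSpan φ ψ s) :=
  FiniteDimensional.span_of_finite K ((s.finite_toSet.image φ).insert ψ)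

lemma finrank_featureSpan_le (φ : ι → X → K) (ψ : X → K) (s : Finset ι) :
    finrank K (featureSpan φ ψ s) ≤ #s + 1 := by
  classical
  calc finrank K (featureSpan φ ψ s)
      = (↑(insert ψ (s.image φ)) : Set (X → K)).finrank K := by
        rw [featureSpan, Set.finrank, Finset.coe_insert, Finset.coe_image]
    _ ≤ #(insert ψ (s.image φ)) := finrank_span_finset_le_card _
    _ ≤ #s + 1 := (Finset.card_insert_le _ _).trans (Nat.succ_le_succ Finset.card_image_le)

lemma vcDimLE_nonnegSets_featureSpan [LinearOrder K] [IsStrictOrderedRing K] {φ : ι → X → K}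
    {ψ : X → K} {s : Finset ι} {k : ℕ} (hs : #s ≤ k) :
    VCDimLE (nonnegSets (featureSpan φ ψ s)) (k + 1) := fun T hT ↦
  (vcDimLE_nonnegSets _ T hT).trans ((finrank_featureSpan_le φ ψ s).trans (Nat.succ_le_succ hs))

variable [LinearOrder K] [Fintype ι]

/-- The family `H_k` over an arbitrary dictionary: the sets where a combination of at most `k` of
the features `φ i` and of `ψ` is nonnegative. For coordinates `φ i` on `ℝ^n × ℝ` it contains the
half-spaces generated by `k`-sparse vectors. -/
def sparseNonnegSets (φ : ι → X → K) (ψ : X → K) (k : ℕ) : Set (Set X) :=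
  ⋃ s ∈ ({s | #s ≤ k} : Finset (Finset ι)), nonnegSets (featureSpan φ ψ s)

variable [IsStrictOrderedRing K] {φ : ι → X → K} {ψ : X → K} {k : ℕ} {U : Finset X}

lemma vcDimLE_sparseNonnegSets_card_add_one :
    VCDimLE (sparseNonnegSets φ ψ k) (Fintype.card ι + 1) :=
  (vcDimLE_nonnegSets_featureSpan (s := Finset.univ) le_rfl).anti <|
    Set.iUnion₂_subset fun s _ ↦ nonnegSets_mono (featureSpan_mono φ ψ (Finset.subset_univ s))

lemma two_pow_card_le_of_shatters_sparseNonnegSets (hU : Shatters (sparseNonnegSets φ ψ k) U) :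
    2 ^ #U ≤ (Fintype.card ι + 1) ^ k * (Fintype.card ι + 2) ^ (k + 1) := by
  have hsupports : #({s | #s ≤ k} : Finset (Finset ι)) ≤ (Fintype.card ι + 1) ^ k := by
    simpa using card_filter_card_le_powerset_le (Finset.univ : Finset ι) k
  calc 2 ^ #U
      ≤ #({s | #s ≤ k} : Finset (Finset ι)) * (#U + 1) ^ (k + 1) :=
        hU.two_pow_card_le_of_biUnion fun s hs ↦
          vcDimLE_nonnegSets_featureSpan (Finset.mem_filter.mp hs).2
    _ ≤ (Fintype.card ι + 1) ^ k * (Fintype.card ι + 2) ^ (k + 1) := by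
        have hcard : #U + 1 ≤ Fintype.card ι + 2 :=
          Nat.succ_le_succ (vcDimLE_sparseNonnegSets_card_add_one U hU)
        gcongr

theorem vc_upper_bound_affine_general (hU : Shatters (sparseNonnegSets φ ψ k) U) :
    (#U : ℝ) ≤ (2 * k + 1) * logb 2 (Fintype.card ι + 2) := by
  have hpow : (2 : ℝ) ^ #U ≤ (Fintype.card ι + 2) ^ (2 * k + 1) := by
    calc (2 : ℝ) ^ #U
        ≤ (Fintype.card ι + 1) ^ k * (Fintype.card ι + 2) ^ (k + 1) :=
          mod_cast two_pow_card_le_of_shatters_sparseNonnegSets hU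
      _ ≤ (Fintype.card ι + 2) ^ k * (Fintype.card ι + 2) ^ (k + 1) := by gcongr; norm_num
      _ = (Fintype.card ι + 2) ^ (2 * k + 1) := by ring
  calc (#U : ℝ) = logb 2 (2 ^ #U) := by rw [logb_pow, logb_self_eq_one one_lt_two, mul_one]
    _ ≤ logb 2 ((Fintype.card ι + 2) ^ (2 * k + 1)) :=
        logb_le_logb_of_le one_lt_two (by positivity) hpow
    _ = (2 * k + 1) * logb 2 (Fintype.card ι + 2) := by rw [logb_pow]; push_cast; ring

end Sparse

lemma sparse_affHalfSpaces_subset_sparseNonnegSets (n k : ℕ) :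
    {H | ∃ (x : Fin n → ℝ) (θ : ℝ), sparse n k x ∧ H = affHalfSpace n x θ} ⊆
      sparseNonnegSets (fun i p ↦ p.1 i) Prod.snd k := by
  rintro _ ⟨x, θ, ⟨s, hs, hxs⟩, rfl⟩
  refine Set.mem_iUnion₂.mpr ⟨s, by simpa using hs, _,
    sum_smul_add_smul_mem_featureSpan _ _ s x θ, ?_⟩
  ext p
  have hsum : ∑ i, p.1 i * x i = ∑ i ∈ s, x i * p.1 i := by
    simp only [mul_comm (p.1 _)]
    exact (Finset.sum_subset s.subset_univ fun i _ hi ↦ by rw [hxs i hi, zero_mul]).symm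
  simp [affHalfSpace, hsum, mul_comm θ]

lemma two_mul_add_one_mul_logb_le (n k : ℕ) :
    (2 * k + 1) * logb 2 (n + 2) ≤ 2 * (k + 1) * logb 2 (exp 1 * (n + 1)) := by
  have hbase : (n + 2 : ℝ) ≤ exp 1 * (n + 1) := by
    nlinarith [add_one_le_exp (1 : ℝ), n.cast_nonneg (α := ℝ)]
  have hlog : 0 ≤ logb 2 (n + 2 : ℝ) := logb_nonneg one_lt_two (by norm_cast; omega)
  gcongr
  all_goals linarith

theorem vc_upper_bound_affine (n k : ℕ) (hn : 2 ≤ n) (hk1 : 1 ≤ k) (hkn : k ≤ n)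
    (U : Finset ((Fin n → ℝ) × ℝ))
    (hU : Shatters {H | ∃ (x : Fin n → ℝ) (θ : ℝ), sparse n k x ∧ H = affHalfSpace n x θ} U) :
    (U.card : ℝ) ≤ 2 * (k + 1) * logb 2 (Real.exp 1 * (n + 1)) := by
  simpa using (vc_upper_bound_affine_general <| hU.mono <|
    sparse_affHalfSpaces_subset_sparseNonnegSets n k).trans (two_mul_add_one_mul_logb_le _ k)
end
end

section
/- Let 1 ≤ k ≤ n be integers. There exists a finite set U ⊆ ℝ^n × ℝ of cardinality k·(⌊lg(n/k)⌋ + 1) that is shattered by the family H_k^{n+1} of affine half-spaces generated by k-sparse vectors and a threshold; in particular, the VC-dimension of H_k^{n+1} is at least k·(⌊lg(n/k)⌋ + 1). -/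
open Real

noncomputable section

/-!
Up to a global sign, a sign vector of length `m + 1` has first entry `1`, and there are only `2 ^ m`
such vectors. Let them be the columns of a sign matrix: any way to cut a subset out of its `m + 1`
rows is then achieved by a multiple of a single coordinate vector, that is, by a `1`-sparse vector.
The block-diagonal matrix with `k` copies of this sign matrix has `k * (m + 1)` rows, and choosing
one column in each block cuts out any subset of them by a `k`-sparse vector. It has `k * 2 ^ m`
columns, which fit into `ℝ^n` for `m = ⌊lg (n / k)⌋`. The threshold coordinate is not involved.
-/

namespace Shatters

variable {X : Type*} {C D : Set (Set X)}

lemma mono_s3 {U : Finset X} (hCD : C ⊆ D) (hU : Shatters C U) : Shatters D U := fun B hB ↦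
  let ⟨A, hA, hAB⟩ := hU B hB
  ⟨A, hCD hA, hAB⟩

lemma exists_card_eq_of_forall_preimage_eq {ι : Type*} [Fintype ι] {f : ι → X}
    (h : ∀ T : Set ι, ∃ A ∈ C, f ⁻¹' A = T) :
    ∃ U : Finset X, U.card = Fintype.card ι ∧ Shatters C U := by
  have hf : f.Injective := Set.preimage_surjective.1 fun T ↦
    let ⟨A, _, hA⟩ := h T
    ⟨A, hA⟩
  refine ⟨Finset.univ.map ⟨f, hf⟩, Finset.card_map _, fun B hB ↦ ?_⟩
  have hB' : (B : Set X) ⊆ Set.range f := by simpa using Finset.coe_subset.2 hB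
  obtain ⟨A, hA, hAB⟩ := h (f ⁻¹' B)
  refine ⟨A, hA, ?_⟩
  calc
    A ∩ (Finset.univ.map ⟨f, hf⟩ : Finset X)
      = A ∩ Set.range f := by simp
    _ = f '' (f ⁻¹' A) := Set.image_preimage_eq_inter_range.symm
    _ = f '' (f ⁻¹' B) := by rw [hAB]
    _ = B := Set.image_preimage_eq_of_subset hB'

end Shatters

section SumSingle

variable {n : ℕ} {β : Type*} [Fintype β] (f : β → Fin n) (c : β → ℝ)

lemma sparse_sum_single : sparse n (Fintype.card β) (∑ j, Pi.single (f j) (c j)) := by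
  classical
  refine ⟨Finset.univ.image f, Finset.card_image_le, fun i hi ↦ ?_⟩
  rw [Finset.sum_apply]
  refine Finset.sum_eq_zero fun j _ ↦ Pi.single_eq_of_ne ?_ _
  rintro rfl
  exact hi (Finset.mem_image_of_mem f (Finset.mem_univ j))

lemma mem_affHalfSpace_sum_single (p : (Fin n → ℝ) × ℝ) (θ : ℝ) :
    p ∈ affHalfSpace n (∑ j, Pi.single (f j) (c j)) θ ↔
      0 ≤ ∑ j, p.1 (f j) * c j + p.2 * θ := by
  change 0 ≤ p.1 ⬝ᵥ (∑ j, Pi.single (f j) (c j)) + p.2 * θ ↔ _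
  simp only [dotProduct_sum, dotProduct_single]

end SumSingle

section Blocks

variable {n : ℕ} {β κ ι : Type*} [DecidableEq β]

/-- The rows of the block-diagonal matrix with one copy of `M` for each `j : β`, as points of
`ℝ^n × {0}`. The columns are placed in `ℝ^n` by `e`; the coordinates outside its range are `0`. -/
def blockPoint (M : ι → κ → ℝ) (e : β × κ ↪ Fin n) (p : β × ι) : (Fin n → ℝ) × ℝ :=
  (Function.extend e (fun q ↦ if p.1 = q.1 then M p.2 q.2 else 0) 0, 0)

lemma blockPoint_fst_apply (M : ι → κ → ℝ) (e : β × κ ↪ Fin n) (p : β × ι) (q : β × κ) :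
    (blockPoint M e p).1 (e q) = if p.1 = q.1 then M p.2 q.2 else 0 :=
  e.injective.extend_apply (fun q ↦ if p.1 = q.1 then M p.2 q.2 else 0) 0 q

lemma exists_sparse_preimage_blockPoint_eq [Fintype β] {M : ι → κ → ℝ}
    (hM : ∀ T : Set ι, ∃ q c, {i | 0 ≤ M i q * c} = T) (e : β × κ ↪ Fin n) (T : Set (β × ι)) :
    ∃ x, sparse n (Fintype.card β) x ∧ blockPoint M e ⁻¹' affHalfSpace n x 0 = T := by
  choose q c hqc using fun j ↦ hM {i | (j, i) ∈ T}
  refine ⟨∑ j, Pi.single (e (j, q j)) (c j), sparse_sum_single _ c, ?_⟩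
  ext ⟨j, i⟩
  calc
    blockPoint M e (j, i) ∈ affHalfSpace n (∑ j, Pi.single (e (j, q j)) (c j)) 0
      ↔ 0 ≤ M i (q j) * c j := by
        simp [mem_affHalfSpace_sum_single, blockPoint_fst_apply]
    _ ↔ (j, i) ∈ T := Set.ext_iff.1 (hqc j) i

end Blocks

section SignMatrix

variable {α : Type*} [DecidableEq α]

/-- The matrix whose columns are the sign vectors on `Option α` with value `1` at `none`: every sign
vector on `Option α` is, up to a global sign, exactly one of them. -/
def signMatrix (o : Option α) (S : Finset α) : ℝ :=
  o.elim 1 fun a ↦ if a ∈ S then 1 else -1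

lemma exists_setOf_signMatrix_mul_nonneg_eq [Finite α] (T : Set (Option α)) :
    ∃ S c, {o | 0 ≤ signMatrix o S * c} = T := by
  classical
  have := Fintype.ofFinite α
  by_cases hT : none ∈ T
  · refine ⟨Finset.univ.filter (some · ∈ T), 1, Set.ext fun o ↦ ?_⟩
    cases o with
    | none => simp [signMatrix, hT]
    | some a => by_cases ha : some a ∈ T <;> simp [signMatrix, ha]
  · refine ⟨Finset.univ.filter (some · ∉ T), -1, Set.ext fun o ↦ ?_⟩
    cases o with
    | none => simp [signMatrix, hT]
    | some a => by_cases ha : some a ∈ T <;> simp [signMatrix, ha]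

end SignMatrix

lemma exists_shatters_homogeneous_of_mul_two_pow_le {n k m : ℕ} (h : k * 2 ^ m ≤ n) :
    ∃ U : Finset ((Fin n → ℝ) × ℝ), U.card = k * (m + 1) ∧
      Shatters {H | ∃ x, sparse n k x ∧ H = affHalfSpace n x 0} U := by
  obtain ⟨e⟩ : Nonempty (Fin k × Finset (Fin m) ↪ Fin n) :=
    Function.Embedding.nonempty_of_card_le (by simpa using h)
  have hcut (T : Set (Fin k × Option (Fin m))) :
      ∃ H ∈ {H | ∃ x, sparse n k x ∧ H = affHalfSpace n x 0},
        blockPoint signMatrix e ⁻¹' H = T := by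
    obtain ⟨x, hx, hT⟩ :=
      exists_sparse_preimage_blockPoint_eq exists_setOf_signMatrix_mul_nonneg_eq e T
    exact ⟨_, ⟨x, by simpa using hx, rfl⟩, hT⟩
  simpa using Shatters.exists_card_eq_of_forall_preimage_eq hcut

lemma pow_floor_logb_le {b x : ℝ} (hb : 1 < b) (hx : 1 ≤ x) : b ^ ⌊logb b x⌋₊ ≤ x := by
  rw [← rpow_natCast, ← le_logb_iff_rpow_le hb (by positivity)]
  exact Nat.floor_le (logb_nonneg hb hx)

theorem vc_lower_bound_affine (n k : ℕ) (hk1 : 1 ≤ k) (hkn : k ≤ n) :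
    ∃ U : Finset ((Fin n → ℝ) × ℝ),
      U.card = k * (Nat.floor (logb 2 ((n : ℝ) / (k : ℝ))) + 1) ∧
      Shatters {H | ∃ (x : Fin n → ℝ) (θ : ℝ), sparse n k x ∧ H = affHalfSpace n x θ} U := by
  have hk : (0 : ℝ) < k := by exact_mod_cast hk1
  have hnk : (1 : ℝ) ≤ n / k := (one_le_div hk).2 (by exact_mod_cast hkn)
  have hblocks : k * 2 ^ ⌊logb 2 ((n : ℝ) / k)⌋₊ ≤ n := by
    exact_mod_cast (le_div_iff₀' hk).1 (pow_floor_logb_le one_lt_two hnk)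
  obtain ⟨U, hcard, hU⟩ := exists_shatters_homogeneous_of_mul_two_pow_le hblocks
  refine ⟨U, hcard, hU.mono_s3 ?_⟩
  rintro H ⟨x, hx, rfl⟩
  exact ⟨x, 0, hx, rfl⟩
end
end

section
/- Let 1 ≤ k ≤ n be integers and let U ⊆ ℝ^n be a finite set of cardinality l ≥ k. Then the number of distinct intersections of U with half-spaces generated by k-sparse vectors satisfies |{H(x) ∩ U : x ∈ Σ_k}| ≤ C(n,k)·(e·l/k)^k ≤ (n·e·l/k)^k, where C(n,k) denotes the binomial coefficient n choose k. -/
open Real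

noncomputable section

/-- The half-space generated by `x`. -/
def halfSpace (n : ℕ) (x : Fin n → ℝ) : Set (Fin n → ℝ) :=
  {a | 0 ≤ ∑ i, a i * x i}

/-!
Fix a support `T` of size `k`. The forms `a ↦ ⟨a, x⟩` with `x` supported on `T` span a space of
dimension at most `k`, so the half-spaces they define shatter no set of more than `k` points: a
shattered set of more points would carry a linear dependence between the evaluations on it, with
some coefficient negative, and a form whose signs agree with those of the coefficients violates it.
The Sauer–Shelah lemma bounds the number of traces coming from `T` by
`∑ j ≤ k, (l choose j) ≤ (e l / k) ^ k`, and there are `n choose k` supports.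
-/

section

open Finset Module

variable {α ι 𝕜 : Type*}

lemma card_le_sum_choose_vcDim [DecidableEq α] {𝒜 : Finset (Finset α)} {U : Finset α}
    (h𝒜 : 𝒜 ⊆ U.powerset) : #𝒜 ≤ ∑ j ∈ Iic 𝒜.vcDim, (#U).choose j := by
  have hsub : 𝒜.shatterer ⊆ (Iic 𝒜.vcDim).biUnion fun j ↦ U.powersetCard j := by
    intro s hs
    rw [mem_shatterer] at hs
    obtain ⟨t, ht, hst⟩ := hs.exists_superset
    simp only [mem_biUnion, mem_Iic, mem_powersetCard]
    exact ⟨#s, hs.card_le_vcDim, hst.trans (mem_powerset.1 (h𝒜 ht)), rfl⟩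
  calc #𝒜 ≤ #𝒜.shatterer := card_le_card_shatterer 𝒜
    _ ≤ #((Iic 𝒜.vcDim).biUnion fun j ↦ U.powersetCard j) := card_le_card hsub
    _ ≤ ∑ j ∈ Iic 𝒜.vcDim, #(U.powersetCard j) := card_biUnion_le
    _ = ∑ j ∈ Iic 𝒜.vcDim, (#U).choose j := by simp only [card_powersetCard]

lemma exists_sum_mul_eq_zero_of_finrank_lt_card [Field 𝕜] {W : Submodule 𝕜 (α → 𝕜)}
    [FiniteDimensional 𝕜 W] {s : Finset α} (hs : finrank 𝕜 W < #s) :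
    ∃ c : α → 𝕜, (∀ f ∈ W, ∑ a ∈ s, c a * f a = 0) ∧ ∃ a ∈ s, c a ≠ 0 := by
  let eval (a : α) : Dual 𝕜 W := LinearMap.proj a ∘ₗ W.subtype
  have hdep : ¬ LinearIndepOn 𝕜 eval (s : Set α) := fun hind ↦ by
    have hcard := hind.linearIndependent.fintype_card_le_finrank
    simp only [Subspace.dual_finrank_eq, SetLike.coe_sort_coe, Fintype.card_coe] at hcard
    exact hs.not_ge hcard
  obtain ⟨c, hc, hne⟩ := not_linearIndepOn_finset_iff.1 hdep
  refine ⟨c, fun f hf ↦ ?_, hne⟩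
  simpa [eval] using LinearMap.congr_fun hc ⟨f, hf⟩

section LinearOrderedField

variable [Field 𝕜] [LinearOrder 𝕜] {W : Submodule 𝕜 (α → 𝕜)} {U S : Finset α}

open Classical in
/-- The traces on the finite set `U` of the sets `{a | 0 ≤ f a}` with `f` in a space `W` of
functions. Only `U` is required to be finite, so that `α` may be a vector space. -/
def nonnegTraces (W : Submodule 𝕜 (α → 𝕜)) (U : Finset α) : Finset (Finset α) :=
  {S ∈ U.powerset | ∃ f ∈ W, {a ∈ U | 0 ≤ f a} = S}

lemma nonnegTraces_subset_powerset : nonnegTraces W U ⊆ U.powerset := by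
  classical exact filter_subset _ _

lemma mem_nonnegTraces : S ∈ nonnegTraces W U ↔ ∃ f ∈ W, {a ∈ U | 0 ≤ f a} = S := by
  classical
  refine mem_filter.trans (and_iff_right_of_imp ?_)
  rintro ⟨f, -, rfl⟩
  exact mem_powerset.2 (filter_subset _ _)

variable [IsStrictOrderedRing 𝕜] [FiniteDimensional 𝕜 W]

lemma exists_sum_mul_eq_zero_and_neg_of_finrank_lt_card (hS : finrank 𝕜 W < #S) :
    ∃ c : α → 𝕜, (∀ f ∈ W, ∑ a ∈ S, c a * f a = 0) ∧ ∃ a ∈ S, c a < 0 := by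
  obtain ⟨c, hc, a, ha, hne⟩ := exists_sum_mul_eq_zero_of_finrank_lt_card hS
  rcases hne.lt_or_gt with hneg | hpos
  · exact ⟨c, hc, a, ha, hneg⟩
  · exact ⟨-c, fun f hf ↦ by simp [hc f hf], a, ha, neg_neg_of_pos hpos⟩

lemma card_le_finrank_of_shatters_nonnegTraces [DecidableEq α]
    (hS : (nonnegTraces W U).Shatters S) : #S ≤ finrank 𝕜 W := by
  by_contra! hlt
  obtain ⟨c, hc, b, hbS, hb⟩ := exists_sum_mul_eq_zero_and_neg_of_finrank_lt_card hlt
  have hSU : S ⊆ U := by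
    obtain ⟨t, ht, hSt⟩ := hS.exists_superset
    exact hSt.trans (mem_powerset.1 (nonnegTraces_subset_powerset ht))
  obtain ⟨t, ht, hSt⟩ := hS (filter_subset (fun a ↦ 0 ≤ c a) S)
  obtain ⟨f, hf, rfl⟩ := mem_nonnegTraces.1 ht
  have hsign : ∀ a ∈ S, 0 ≤ f a ↔ 0 ≤ c a := fun a ha ↦ by
    simpa [ha, hSU ha] using Finset.ext_iff.1 hSt a
  have hneg : ∀ a ∈ S, c a < 0 → 0 < c a * f a := fun a ha hca ↦
    mul_pos_of_neg_of_neg hca (lt_of_not_ge fun hfa ↦ hca.not_ge ((hsign a ha).1 hfa))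
  have hnonneg : ∀ a ∈ S, 0 ≤ c a * f a := fun a ha ↦ by
    rcases le_or_gt 0 (c a) with hca | hca
    · exact mul_nonneg hca ((hsign a ha).2 hca)
    · exact (hneg a ha hca).le
  exact (sum_pos' hnonneg ⟨b, hbS, hneg b hbS hb⟩).ne' (hc f hf)

lemma vcDim_nonnegTraces_le_finrank [DecidableEq α] :
    (nonnegTraces W U).vcDim ≤ finrank 𝕜 W :=
  Finset.sup_le fun _ hS ↦ card_le_finrank_of_shatters_nonnegTraces (mem_shatterer.1 hS)

lemma card_nonnegTraces_le_sum_choose {d : ℕ} (hd : finrank 𝕜 W ≤ d) :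
    #(nonnegTraces W U) ≤ ∑ j ∈ Iic d, (#U).choose j := by
  classical
  exact (card_le_sum_choose_vcDim nonnegTraces_subset_powerset).trans <|
    sum_le_sum_of_subset (Iic_subset_Iic.2 (vcDim_nonnegTraces_le_finrank.trans hd))

end LinearOrderedField

section Coordinates

variable [Field 𝕜]

variable (𝕜) in
/-- The space of linear forms on `ι → 𝕜` spanned by the coordinates in `T`, as functions: for
`𝕜 = ℝ` these are the forms `⟨·, x⟩` with `x` supported on `T`. -/
def coordinateSpan (T : Finset ι) : Submodule 𝕜 ((ι → 𝕜) → 𝕜) :=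
  Submodule.span 𝕜 (Set.range fun (i : T) (a : ι → 𝕜) ↦ a i)

instance (T : Finset ι) : FiniteDimensional 𝕜 (coordinateSpan 𝕜 T) :=
  FiniteDimensional.span_of_finite 𝕜 (Set.finite_range _)

lemma finrank_coordinateSpan_le_card (T : Finset ι) : finrank 𝕜 (coordinateSpan 𝕜 T) ≤ #T :=
  (finrank_range_le_card _).trans_eq (Fintype.card_coe T)

lemma sum_mul_mem_coordinateSpan [Fintype ι] {T : Finset ι} {x : ι → 𝕜}
    (hx : ∀ i ∉ T, x i = 0) : (fun a ↦ ∑ i, a i * x i) ∈ coordinateSpan 𝕜 T := by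
  have hsum : (fun a : ι → 𝕜 ↦ ∑ i, a i * x i) = ∑ i ∈ T, x i • fun a : ι → 𝕜 ↦ a i := by
    ext a
    rw [Finset.sum_apply, ← sum_subset (subset_univ T) fun i _ hi ↦ by rw [hx i hi, mul_zero]]
    exact sum_congr rfl fun i _ ↦ mul_comm _ _
  rw [hsum]
  exact Submodule.sum_mem _ fun i hi ↦
    Submodule.smul_mem _ _ (Submodule.subset_span ⟨⟨i, hi⟩, rfl⟩)

end Coordinates

variable {n k : ℕ}

lemma sparse.exists_mem_nonnegTraces {x : Fin n → ℝ} (hx : sparse n k x) (hkn : k ≤ n)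
    (U : Finset (Fin n → ℝ)) :
    ∃ T : Finset (Fin n), #T = k ∧
      ∃ S ∈ nonnegTraces (coordinateSpan ℝ T) U, (S : Set (Fin n → ℝ)) = halfSpace n x ∩ U := by
  obtain ⟨s, hsk, hs⟩ := hx
  obtain ⟨T, hsT, hT⟩ := exists_superset_card_eq hsk (by simpa using hkn)
  have hxT : ∀ i ∉ T, x i = 0 := fun i hi ↦ hs i fun his ↦ hi (hsT his)
  refine ⟨T, hT, _, mem_nonnegTraces.2 ⟨_, sum_mul_mem_coordinateSpan hxT, rfl⟩, ?_⟩
  ext a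
  simp [halfSpace, and_comm]

lemma ncard_sparse_halfSpace_inter_le (hkn : k ≤ n) (U : Finset (Fin n → ℝ)) :
    {S : Set (Fin n → ℝ) | ∃ x, sparse n k x ∧ S = halfSpace n x ∩ U}.ncard ≤
      n.choose k * ∑ j ∈ Iic k, (#U).choose j := by
  classical
  let traces : Finset (Finset (Fin n → ℝ)) :=
    (univ.powersetCard k).biUnion fun T ↦ nonnegTraces (coordinateSpan ℝ T) U
  have hsub : {S : Set (Fin n → ℝ) | ∃ x, sparse n k x ∧ S = halfSpace n x ∩ U} ⊆
      (fun S : Finset (Fin n → ℝ) ↦ (S : Set (Fin n → ℝ))) '' traces := by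
    rintro _ ⟨x, hx, rfl⟩
    obtain ⟨T, hT, S, hS, hSx⟩ := hx.exists_mem_nonnegTraces hkn U
    exact ⟨S, mem_biUnion.2 ⟨T, mem_powersetCard_univ.2 hT, hS⟩, hSx⟩
  have hcard : #traces ≤ #((univ : Finset (Fin n)).powersetCard k) * ∑ j ∈ Iic k, (#U).choose j :=
    card_biUnion_le_card_mul _ _ _ fun T hT ↦ card_nonnegTraces_le_sum_choose <|
      (finrank_coordinateSpan_le_card T).trans_eq (mem_powersetCard_univ.1 hT)
  rw [card_powersetCard, card_univ, Fintype.card_fin] at hcard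
  calc _ ≤ _ := Set.ncard_le_ncard hsub (traces.finite_toSet.image _)
    _ ≤ #traces := (Set.ncard_image_le traces.finite_toSet).trans_eq (Set.ncard_coe_finset _)
    _ ≤ n.choose k * ∑ j ∈ Iic k, (#U).choose j := hcard

lemma pow_mul_sum_choose_le_add_one_pow {R : Type*} [CommSemiring R] [PartialOrder R]
    [IsOrderedRing R] {r : R} (hr₀ : 0 ≤ r) (hr₁ : r ≤ 1) (d m : ℕ) :
    r ^ d * ∑ j ∈ Iic d, (m.choose j : R) ≤ (r + 1) ^ m := by
  calc r ^ d * ∑ j ∈ Iic d, (m.choose j : R)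
      = ∑ j ∈ Iic d, r ^ d * m.choose j := mul_sum _ _ _
    _ ≤ ∑ j ∈ Iic d, r ^ j * m.choose j := sum_le_sum fun j hj ↦
        mul_le_mul_of_nonneg_right (pow_le_pow_of_le_one hr₀ hr₁ (mem_Iic.1 hj)) (by positivity)
    _ ≤ ∑ j ∈ Iic (max d m), r ^ j * m.choose j :=
        sum_le_sum_of_subset_of_nonneg (Iic_subset_Iic.2 (le_max_left d m))
          fun _ _ _ ↦ by positivity
    _ = ∑ j ∈ range (m + 1), r ^ j * m.choose j := by
        refine (sum_subset (fun j hj ↦ ?_) fun j _ hj ↦ ?_).symm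
        · grind
        · rw [Nat.choose_eq_zero_of_lt (by grind), Nat.cast_zero, mul_zero]
    _ = (r + 1) ^ m := by simp only [add_pow, one_pow, mul_one]

lemma sum_choose_le_exp_mul_div_pow {d m : ℕ} (hd : 0 < d) (hdm : d ≤ m) :
    ∑ j ∈ Iic d, (m.choose j : ℝ) ≤ (exp 1 * m / d) ^ d := by
  have hm : 0 < m := hd.trans_le hdm
  have hr₁ : (d / m : ℝ) ≤ 1 := div_le_one_of_le₀ (by exact_mod_cast hdm) m.cast_nonneg
  have hexp : exp (d / m : ℝ) ^ m = exp 1 ^ d := by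
    rw [← exp_nat_mul, ← exp_nat_mul, mul_div_cancel₀ _ (by positivity), mul_one]
  rw [← div_div_eq_mul_div, div_pow, le_div_iff₀' (by positivity)]
  calc (d / m : ℝ) ^ d * ∑ j ∈ Iic d, (m.choose j : ℝ)
      ≤ (d / m + 1 : ℝ) ^ m := pow_mul_sum_choose_le_add_one_pow (by positivity) hr₁ d m
    _ ≤ exp (d / m : ℝ) ^ m := by gcongr; exact add_one_le_exp _
    _ = exp 1 ^ d := hexp

end

theorem sauer_bound_sparse_halfspaces (n k l : ℕ) (hk1 : 1 ≤ k) (hkn : k ≤ n)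
    (U : Finset (Fin n → ℝ)) (hUl : U.card = l) (hkl : k ≤ l) :
    (({S : Set (Fin n → ℝ) | ∃ x : Fin n → ℝ, sparse n k x ∧ S = halfSpace n x ∩ (U : Set (Fin n → ℝ))}).ncard : ℝ)
      ≤ (n.choose k : ℝ) * (Real.exp 1 * l / k) ^ k ∧
    (n.choose k : ℝ) * (Real.exp 1 * l / k) ^ k ≤ ((n : ℝ) * Real.exp 1 * l / k) ^ k := by
  subst hUl
  constructor
  · calc _ ≤ ((n.choose k * ∑ j ∈ Finset.Iic k, U.card.choose j : ℕ) : ℝ) :=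
          Nat.cast_le.2 (ncard_sparse_halfSpace_inter_le hkn U)
      _ = (n.choose k : ℝ) * ∑ j ∈ Finset.Iic k, (U.card.choose j : ℝ) := by push_cast; rfl
      _ ≤ _ := by gcongr; exact sum_choose_le_exp_mul_div_pow hk1 hkl
  · calc (n.choose k : ℝ) * (exp 1 * U.card / k) ^ k
        ≤ (n : ℝ) ^ k * (exp 1 * U.card / k) ^ k := by
          gcongr; exact_mod_cast Nat.choose_le_pow n k
      _ = (n * exp 1 * U.card / k) ^ k := by ring
end
end
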